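/- arXiv:2312.14572 — 7 statements merged into one kernel-verified Lean document; each statement's English description precedes it below -/
import Mathlib

section
/- Let L ∈ ℝ^{mn×mn} be a symmetric matrix. The infimum of ⟨L, P⟩ over all GW-SDP-feasible pairs (π, P) is less than or equal to the infimum of vec(π)ᵀ L vec(π) over all π ∈ Π(α,β). In particular, the GW-SDP optimal value is a lower bound for the Gromov-Wasserstein optimal value. -/
/-!
A coupling `π` lifts to the SDP-feasible pair `(π, vec(π) vec(π)ᵀ)`, whose SDP value is the
Gromov-Wasserstein value of `π` (`gwsdpFeasible_rankOne`, `trInner_rankOne`). So the set of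
Gromov-Wasserstein values is contained in the set of SDP values. For real-valued infima to be
monotone under this inclusion, the smaller set must be nonempty (it contains the value of the
product coupling `α βᵀ`) and the larger one bounded below: the constraints `P aᵢ = αᵢ vec(π)` and
`P ≥ 0` force all entries of `P` into `[0, 1]`, so `⟨L, P⟩ ≥ -∑ |L u v|`.
-/

open Matrix BigOperators

noncomputable section

/-- A probability vector: entrywise nonnegative with entries summing to 1. -/
def IsProbVec {k : ℕ} (α : Fin k → ℝ) : Prop :=
  (∀ i, 0 ≤ α i) ∧ ∑ i, α i = 1

/-- `π ∈ Π(α,β)`: nonnegative entries, row sums `α`, column sums `β`. -/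
def IsCoupling {m n : ℕ} (α : Fin m → ℝ) (β : Fin n → ℝ)
    (π : Matrix (Fin m) (Fin n) ℝ) : Prop :=
  (∀ i j, 0 ≤ π i j) ∧ (∀ i, ∑ j, π i j = α i) ∧ (∀ j, ∑ i, π i j = β j)

/-- Vectorization of an `m × n` matrix, indexed by pairs `(i, j)`. -/
def vecz {m n : ℕ} (π : Matrix (Fin m) (Fin n) ℝ) : Fin m × Fin n → ℝ :=
  fun p => π p.1 p.2

/-- `a_i = vec(e_i 1ₙᵀ)`: indicator of the entries in row `i`. -/
def aVec {m n : ℕ} (i : Fin m) : Fin m × Fin n → ℝ :=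
  fun p => if p.1 = i then 1 else 0

/-- `b_j = vec(1ₘ e_jᵀ)`: indicator of the entries in column `j`. -/
def bVec {m n : ℕ} (j : Fin n) : Fin m × Fin n → ℝ :=
  fun p => if p.2 = j then 1 else 0

/-- The `(mn+1) × (mn+1)` block matrix `[[P, x], [xᵀ, c]]`. -/
def blockMat {m n : ℕ} (P : Matrix (Fin m × Fin n) (Fin m × Fin n) ℝ)
    (x : Fin m × Fin n → ℝ) (c : ℝ) :
    Matrix (Option (Fin m × Fin n)) (Option (Fin m × Fin n)) ℝ :=
  Matrix.of fun u v =>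
    match u, v with
    | some a, some b => P a b
    | some a, none => x a
    | none, some b => x b
    | none, none => c

/-- The trace inner product `⟨L, P⟩ = ∑_{u,v} L_{uv} P_{uv}`. -/
def trInner {m n : ℕ} (L P : Matrix (Fin m × Fin n) (Fin m × Fin n) ℝ) : ℝ :=
  ∑ u, ∑ v, L u v * P u v

/-- The Gromov-Wasserstein objective `vec(π)ᵀ L vec(π)`. -/
def gwObj {m n : ℕ} (L : Matrix (Fin m × Fin n) (Fin m × Fin n) ℝ)
    (π : Matrix (Fin m) (Fin n) ℝ) : ℝ :=
  vecz π ⬝ᵥ L.mulVec (vecz π)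

/-- Feasibility for the proposed SDP relaxation (GW-SDP). -/
def GWSDPFeasible {m n : ℕ} (α : Fin m → ℝ) (β : Fin n → ℝ)
    (π : Matrix (Fin m) (Fin n) ℝ)
    (P : Matrix (Fin m × Fin n) (Fin m × Fin n) ℝ) : Prop :=
  IsCoupling α β π ∧
  (blockMat P (vecz π) 1).PosSemidef ∧
  (∀ i, P.mulVec (aVec i) = α i • vecz π) ∧
  (∀ j, P.mulVec (bVec j) = β j • vecz π) ∧
  (∀ u v, 0 ≤ P u v)

/-- Feasibility for the standard SDP relaxation. -/
def StdSDPFeasible {m n : ℕ} (α : Fin m → ℝ) (β : Fin n → ℝ)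
    (π : Matrix (Fin m) (Fin n) ℝ)
    (P : Matrix (Fin m × Fin n) (Fin m × Fin n) ℝ) : Prop :=
  IsCoupling α β π ∧ (blockMat P (vecz π) 1).PosSemidef

theorem isCoupling_product {m n : ℕ} {α : Fin m → ℝ} {β : Fin n → ℝ}
    (hα : IsProbVec α) (hβ : IsProbVec β) :
    IsCoupling α β (Matrix.of fun i j => α i * β j) := by
  refine ⟨fun i j => mul_nonneg (hα.1 i) (hβ.1 j), fun i => ?_, fun j => ?_⟩
  · simp [← Finset.mul_sum, hβ.2]
  · simp [← Finset.sum_mul, hα.2]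

theorem gwsdpFeasible_rankOne {m n : ℕ} {α : Fin m → ℝ} {β : Fin n → ℝ}
    {π : Matrix (Fin m) (Fin n) ℝ} (h : IsCoupling α β π) :
    GWSDPFeasible α β π (vecMulVec (vecz π) (vecz π)) := by
  refine ⟨h, ?_, fun i => ?_, fun j => ?_, fun u v => mul_nonneg (h.1 _ _) (h.1 _ _)⟩
  · -- The block matrix is `y yᵀ` for `y` the vector `vec(π)` extended by the entry `1`.
    have key : blockMat (vecMulVec (vecz π) (vecz π)) (vecz π) 1 =
        vecMulVec (fun o : Option (Fin m × Fin n) => o.elim 1 (vecz π))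
          (star fun o : Option (Fin m × Fin n) => o.elim 1 (vecz π)) := by
      ext u v
      cases u <;> cases v <;> simp [blockMat, vecMulVec_apply]
    rw [key]
    exact posSemidef_vecMulVec_self_star _
  · ext u
    simp [mulVec, dotProduct, vecMulVec_apply, aVec, vecz, Fintype.sum_prod_type, ← h.2.1 i,
      Finset.mul_sum, mul_comm]
  · ext u
    simp [mulVec, dotProduct, vecMulVec_apply, bVec, vecz, Fintype.sum_prod_type, ← h.2.2 j,
      Finset.mul_sum, mul_comm]

theorem trInner_rankOne {m n : ℕ} (L : Matrix (Fin m × Fin n) (Fin m × Fin n) ℝ)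
    (π : Matrix (Fin m) (Fin n) ℝ) :
    trInner L (vecMulVec (vecz π) (vecz π)) = gwObj L π := by
  simp only [trInner, gwObj, mulVec, dotProduct, vecMulVec_apply, Finset.mul_sum]
  exact Finset.sum_congr rfl fun u _ => Finset.sum_congr rfl fun v _ => by ring

/-- Entry `(u, v)` of `P` is one of the nonnegative terms of `(P aᵢ) u = αᵢ π u`, where `i` is the
row containing `v`. -/
theorem GWSDPFeasible.entry_le_one {m n : ℕ} {α : Fin m → ℝ} {β : Fin n → ℝ}
    {π : Matrix (Fin m) (Fin n) ℝ} {P : Matrix (Fin m × Fin n) (Fin m × Fin n) ℝ}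
    (hα : IsProbVec α) (h : GWSDPFeasible α β π P) (u v : Fin m × Fin n) : P u v ≤ 1 := by
  obtain ⟨⟨hπ0, hπr, -⟩, -, ha, -, hP⟩ := h
  have hα1 : ∀ i, α i ≤ 1 := fun i =>
    hα.2 ▸ Finset.single_le_sum (fun k _ => hα.1 k) (Finset.mem_univ i)
  have hπ1 : π u.1 u.2 ≤ 1 :=
    (hπr u.1 ▸ Finset.single_le_sum (fun k _ => hπ0 u.1 k) (Finset.mem_univ u.2) :
      π u.1 u.2 ≤ α u.1).trans (hα1 _)
  calc P u v = P u v * aVec v.1 v := by simp [aVec]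
    _ ≤ ∑ w, P u w * aVec v.1 w :=
      Finset.single_le_sum (f := fun w => P u w * aVec v.1 w)
        (fun w _ => mul_nonneg (hP u w) (by unfold aVec; split_ifs <;> norm_num))
        (Finset.mem_univ v)
    _ = α v.1 * π u.1 u.2 := congrFun (ha v.1) u
    _ ≤ 1 := mul_le_one₀ (hα1 _) (hπ0 _ _) hπ1

/-- The GW-SDP optimal value is a lower bound for the GW optimal value. -/
theorem stmt_1 {m n : ℕ} (α : Fin m → ℝ) (β : Fin n → ℝ)
    (hα : IsProbVec α) (hβ : IsProbVec β)
    (L : Matrix (Fin m × Fin n) (Fin m × Fin n) ℝ) (hL : L.IsSymm) :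
    sInf {r : ℝ | ∃ π P, GWSDPFeasible α β π P ∧ r = trInner L P} ≤
      sInf {r : ℝ | ∃ π, IsCoupling α β π ∧ r = gwObj L π} := by
  refine csInf_le_csInf ?_ ⟨_, _, isCoupling_product hα hβ, rfl⟩ ?_
  · refine ⟨∑ u, ∑ v, -|L u v|, ?_⟩
    rintro r ⟨π, P, h, rfl⟩
    refine Finset.sum_le_sum fun u _ => Finset.sum_le_sum fun v _ => ?_
    have h0 : 0 ≤ P u v := h.2.2.2.2 u v
    have h1 : P u v ≤ 1 := h.entry_le_one hα u v
    have h2 : |L u v * P u v| ≤ |L u v| := by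
      rw [abs_mul, abs_of_nonneg h0]
      exact mul_le_of_le_one_right (abs_nonneg _) h1
    exact (abs_le.mp h2).1
  · rintro r ⟨π, h, rfl⟩
    exact ⟨π, _, gwsdpFeasible_rankOne h, (trInner_rankOne L π).symm⟩
end
end

section
/- (Unboundedness of the standard SDP relaxation.) Let α ∈ ℝ^m and β ∈ ℝ^n be probability vectors and let L ∈ ℝ^{mn×mn} be a symmetric matrix with zero diagonal (L_{uu} = 0 for all u) such that L_{st} > 0 for some pair of indices s ≠ t. Then the standard SDP relaxation of the Gromov-Wasserstein problem is unbounded below: for every M ∈ ℝ there exists a standard-SDP-feasible pair (π, P) with ⟨L, P⟩ < M. -/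
/-!
Write `x = vec(αβᵀ)`. The rank-one pair `(αβᵀ, xxᵀ)` is feasible, and it stays feasible when any
`c • wwᵀ` with `c ≥ 0` is added to the second component, because the constraints only bound `P`
from below, by `xxᵀ` in the Loewner order. For `w = e_s - e_t` the zero diagonal and the symmetry of `L` give
`⟨L, wwᵀ⟩ = L_ss + L_tt - L_st - L_ts = -2 L_st < 0`, so the objective tends to `-∞` along this ray.
-/

open Matrix BigOperators

noncomputable section

lemma isCoupling_vecMulVec {m n : ℕ} {α : Fin m → ℝ} {β : Fin n → ℝ}
    (hα : IsProbVec α) (hβ : IsProbVec β) : IsCoupling α β (vecMulVec α β) := by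
  refine ⟨fun i j => mul_nonneg (hα.1 i) (hβ.1 j), fun i => ?_, fun j => ?_⟩
  · simp [vecMulVec_apply, ← Finset.mul_sum, hβ.2]
  · simp [vecMulVec_apply, ← Finset.sum_mul, hα.2]

/-- The block matrix splits as `zzᵀ + c • w'w'ᵀ`, where `z` and `w'` extend `x` and `w` by the
entries `1` and `0`. -/
lemma posSemidef_blockMat_ray {m n : ℕ} (x w : Fin m × Fin n → ℝ) {c : ℝ} (hc : 0 ≤ c) :
    (blockMat (vecMulVec x x + c • vecMulVec w w) x 1).PosSemidef := by
  let z : Option (Fin m × Fin n) → ℝ := fun o => o.elim 1 x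
  let w' : Option (Fin m × Fin n) → ℝ := fun o => o.elim 0 w
  have h : blockMat (vecMulVec x x + c • vecMulVec w w) x 1
      = vecMulVec z (star z) + c • vecMulVec w' (star w') := by
    ext (_ | u) (_ | v) <;> simp [blockMat, z, w', vecMulVec_apply]
  rw [h]
  exact (posSemidef_vecMulVec_self_star z).add ((posSemidef_vecMulVec_self_star w').smul hc)

lemma trInner_add_smul {m n : ℕ} (L P Q : Matrix (Fin m × Fin n) (Fin m × Fin n) ℝ) (c : ℝ) :
    trInner L (P + c • Q) = trInner L P + c * trInner L Q := by
  simp only [trInner, Finset.mul_sum, ← Finset.sum_add_distrib]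
  refine Finset.sum_congr rfl fun u _ => Finset.sum_congr rfl fun v _ => ?_
  simp only [Matrix.add_apply, Matrix.smul_apply, smul_eq_mul]
  ring

lemma trInner_single_sub_single {m n : ℕ} (L : Matrix (Fin m × Fin n) (Fin m × Fin n) ℝ)
    (s t : Fin m × Fin n) :
    trInner L (vecMulVec (Pi.single s 1 - Pi.single t 1) (Pi.single s 1 - Pi.single t 1))
      = L s s + L t t - L s t - L t s := by
  simp only [trInner, vecMulVec_apply, Pi.sub_apply, Pi.single_apply, mul_sub,
    Finset.sum_sub_distrib, mul_ite, mul_one, mul_zero,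
    Finset.sum_ite_eq', Finset.mem_univ, if_true]
  ring

/-- Unboundedness of the standard SDP relaxation of the GW problem. -/
theorem stmt_4 {m n : ℕ} (α : Fin m → ℝ) (β : Fin n → ℝ)
    (hα : IsProbVec α) (hβ : IsProbVec β)
    (L : Matrix (Fin m × Fin n) (Fin m × Fin n) ℝ) (hL : L.IsSymm)
    (hdiag : ∀ u, L u u = 0)
    (s t : Fin m × Fin n) (hst : s ≠ t) (hLst : 0 < L s t) :
    ∀ M : ℝ, ∃ (π : Matrix (Fin m) (Fin n) ℝ)
      (P : Matrix (Fin m × Fin n) (Fin m × Fin n) ℝ),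
      StdSDPFeasible α β π P ∧ trInner L P < M := by
  intro M
  set x := vecz (vecMulVec α β)
  set w : Fin m × Fin n → ℝ := Pi.single s 1 - Pi.single t 1
  -- The step length makes `2 c L_st` exceed `⟨L, xxᵀ⟩ - M`.
  let c := (|trInner L (vecMulVec x x) - M| + 1) / (2 * L s t)
  have hc : 0 ≤ c := by positivity
  refine ⟨vecMulVec α β, vecMulVec x x + c • vecMulVec w w,
    ⟨isCoupling_vecMulVec hα hβ, posSemidef_blockMat_ray x w hc⟩, ?_⟩
  have hcL : c * (2 * L s t) = |trInner L (vecMulVec x x) - M| + 1 :=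
    div_mul_cancel₀ _ (by positivity)
  rw [trInner_add_smul, trInner_single_sub_single, hdiag, hdiag, hL.apply s t]
  linarith [le_abs_self (trInner L (vecMulVec x x) - M)]
end
end

section
/- Let π ∈ Π(α,β) and let P ∈ ℝ^{mn×mn} have nonnegative entries and satisfy the marginal constraints P·a_i = α_i·vec(π) for all i ∈ [m] and P·b_j = β_j·vec(π) for all j ∈ [n]. Then the trace of P is at most 1. -/
open Matrix BigOperators

noncomputable section

/-- Any nonnegative `P` satisfying the marginal constraints has trace at most one. -/
theorem stmt_5 {m n : ℕ} (α : Fin m → ℝ) (β : Fin n → ℝ)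
    (hα : IsProbVec α) (hβ : IsProbVec β)
    (π : Matrix (Fin m) (Fin n) ℝ) (hπ : IsCoupling α β π)
    (P : Matrix (Fin m × Fin n) (Fin m × Fin n) ℝ)
    (hP : ∀ u v, 0 ≤ P u v)
    (ha : ∀ i, P.mulVec (aVec i) = α i • vecz π)
    (hb : ∀ j, P.mulVec (bVec j) = β j • vecz π) :
    P.trace ≤ 1 := by
  -- `P_uu` is one of the nonnegative terms of `(P a_i)_u = α_i π_u`, where `i` is the row of `u`;
  -- since `α_i ≤ 1`, this gives `P_uu ≤ π_u`, and the entries of `π` sum to `1`.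
  have hα1 : ∀ i, α i ≤ 1 := fun i =>
    hα.2 ▸ Finset.single_le_sum (fun k _ => hα.1 k) (Finset.mem_univ i)
  have hdiag : ∀ u : Fin m × Fin n, P u u ≤ π u.1 u.2 := by
    intro u
    have hrow : ∑ v, P u v * aVec u.1 v = α u.1 * π u.1 u.2 := congrFun (ha u.1) u
    have hterm : P u u * aVec u.1 u ≤ ∑ v, P u v * aVec u.1 v :=
      Finset.single_le_sum (f := fun v => P u v * aVec u.1 v)
        (fun v _ => mul_nonneg (hP u v) (by unfold aVec; split_ifs <;> norm_num))
        (Finset.mem_univ u)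
    have hself : aVec u.1 u = 1 := by simp [aVec]
    rw [hself, mul_one, hrow] at hterm
    exact hterm.trans (mul_le_of_le_one_left (hπ.1 _ _) (hα1 _))
  calc P.trace = ∑ u, P u u := rfl
    _ ≤ ∑ u : Fin m × Fin n, π u.1 u.2 := Finset.sum_le_sum fun u _ => hdiag u
    _ = ∑ i, ∑ j, π i j := Fintype.sum_prod_type _
    _ = 1 := by simp only [hπ.2.1, hα.2]
end
end

section
/- (Weak duality between GW-Dual and GW-SDP.) Let L ∈ ℝ^{mn×mn} be symmetric, let (λ, μ, η, θ, Z, y, t) be GW-Dual-feasible dual variables, and let (π, P) be any GW-SDP-feasible pair. Then λᵀα + μᵀβ − t ≤ ⟨L, P⟩. -/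
/-!
Weak duality is the nonnegativity of the pairing of two positive semidefinite matrices. Pairing the
primal block matrix with the dual one gives `0 ≤ ⟨H, P⟩ + 2 ⟨y, vec π⟩ + t`
(`trInner_blockMat_nonneg`, which rests on the Schur product theorem). The constraints `P a_i = α_i vec π` and
`P b_j = β_j vec π` turn the multiplier terms of `⟨H, P⟩` into `∑ α_i ⟨η^i, vec π⟩` and
`∑ β_j ⟨θ^j, vec π⟩` (`trInner_dualH`), while the marginal constraints give
`⟨g, vec π⟩ = λᵀα + μᵀβ + ∑ α_i ⟨η^i, vec π⟩ + ∑ β_j ⟨θ^j, vec π⟩ + 2 ⟨y, vec π⟩`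
(`dualG_dotProduct_vecz`). Subtracting and using `⟨g, vec π⟩ ≤ 0 ≤ ⟨Z, P⟩` gives the bound.
-/

open Matrix BigOperators

noncomputable section

/-- The matrix `H` appearing in the GW-Dual program. -/
def dualH {m n : ℕ} (L Z : Matrix (Fin m × Fin n) (Fin m × Fin n) ℝ)
    (η : Fin m → (Fin m × Fin n → ℝ)) (θ : Fin n → (Fin m × Fin n → ℝ)) :
    Matrix (Fin m × Fin n) (Fin m × Fin n) ℝ :=
  L - Z
    + (1 / 2 : ℝ) • ∑ i, (Matrix.vecMulVec (η i) (aVec i) + Matrix.vecMulVec (aVec i) (η i))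
    + (1 / 2 : ℝ) • ∑ j, (Matrix.vecMulVec (θ j) (bVec j) + Matrix.vecMulVec (bVec j) (θ j))

/-- The vector `g` appearing in the GW-Dual program. -/
def dualG {m n : ℕ} (α : Fin m → ℝ) (β : Fin n → ℝ)
    (lam : Fin m → ℝ) (mu : Fin n → ℝ)
    (η : Fin m → (Fin m × Fin n → ℝ)) (θ : Fin n → (Fin m × Fin n → ℝ))
    (y : Fin m × Fin n → ℝ) : Fin m × Fin n → ℝ :=
  (∑ i, (lam i • aVec i + α i • η i)) + (∑ j, (mu j • bVec j + β j • θ j)) + (2 : ℝ) • y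

/-- Feasibility for the GW-Dual program. -/
def GWDualFeasible {m n : ℕ} (α : Fin m → ℝ) (β : Fin n → ℝ)
    (L : Matrix (Fin m × Fin n) (Fin m × Fin n) ℝ)
    (lam : Fin m → ℝ) (mu : Fin n → ℝ)
    (η : Fin m → (Fin m × Fin n → ℝ)) (θ : Fin n → (Fin m × Fin n → ℝ))
    (Z : Matrix (Fin m × Fin n) (Fin m × Fin n) ℝ)
    (y : Fin m × Fin n → ℝ) (t : ℝ) : Prop :=
  (blockMat (dualH L Z η θ) y t).PosSemidef ∧
  (∀ u, dualG α β lam mu η θ y u ≤ 0) ∧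
  (∀ u v, 0 ≤ Z u v)

/-- The trace inner product of two positive semidefinite matrices is nonnegative: it is the value at
the all-ones vector of the quadratic form of their Hadamard product. -/
lemma sum_mul_nonneg_of_posSemidef {ι : Type*} [Fintype ι] {A B : Matrix ι ι ℝ}
    (hA : A.PosSemidef) (hB : B.PosSemidef) : 0 ≤ ∑ u, ∑ v, A u v * B u v := by
  have h := (hA.hadamard hB).dotProduct_mulVec_nonneg (fun _ => 1)
  simpa [dotProduct, mulVec, Matrix.hadamard] using h

lemma trInner_blockMat_nonneg {m n : ℕ} {H P : Matrix (Fin m × Fin n) (Fin m × Fin n) ℝ}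
    {y x : Fin m × Fin n → ℝ} {t : ℝ}
    (hH : (blockMat H y t).PosSemidef) (hP : (blockMat P x 1).PosSemidef) :
    0 ≤ trInner H P + 2 * (y ⬝ᵥ x) + t := by
  have h := sum_mul_nonneg_of_posSemidef hH hP
  simp only [Fintype.sum_option, blockMat, Matrix.of_apply, Finset.sum_add_distrib] at h
  simp only [trInner, dotProduct]
  linarith

lemma trInner_add {m n : ℕ} (A B P : Matrix (Fin m × Fin n) (Fin m × Fin n) ℝ) :
    trInner (A + B) P = trInner A P + trInner B P := by
  simp only [trInner, Matrix.add_apply, add_mul, Finset.sum_add_distrib]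

lemma trInner_sub {m n : ℕ} (A B P : Matrix (Fin m × Fin n) (Fin m × Fin n) ℝ) :
    trInner (A - B) P = trInner A P - trInner B P := by
  simp only [trInner, Matrix.sub_apply, sub_mul, Finset.sum_sub_distrib]

lemma trInner_smul {m n : ℕ} (c : ℝ) (A P : Matrix (Fin m × Fin n) (Fin m × Fin n) ℝ) :
    trInner (c • A) P = c * trInner A P := by
  simp only [trInner, Matrix.smul_apply, smul_eq_mul, mul_assoc, Finset.mul_sum]

lemma trInner_sum {m n : ℕ} {ι : Type*} (s : Finset ι)
    (A : ι → Matrix (Fin m × Fin n) (Fin m × Fin n) ℝ)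
    (P : Matrix (Fin m × Fin n) (Fin m × Fin n) ℝ) :
    trInner (∑ i ∈ s, A i) P = ∑ i ∈ s, trInner (A i) P := by
  classical
  induction s using Finset.induction_on with
  | empty => simp [trInner]
  | insert a s ha ih => rw [Finset.sum_insert ha, Finset.sum_insert ha, trInner_add, ih]

/-- For symmetric `P`, both halves of a symmetrized rank-one matrix pair with `P` to `⟨v, P a⟩`. -/
lemma trInner_vecMulVec_symm {m n : ℕ} {P : Matrix (Fin m × Fin n) (Fin m × Fin n) ℝ}
    (hP : ∀ u v, P u v = P v u) (v a : Fin m × Fin n → ℝ) :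
    trInner (Matrix.vecMulVec v a + Matrix.vecMulVec a v) P = 2 * (v ⬝ᵥ P.mulVec a) := by
  have h1 : trInner (Matrix.vecMulVec v a) P = v ⬝ᵥ P.mulVec a := by
    simp only [trInner, dotProduct, mulVec, Matrix.vecMulVec_apply, Finset.mul_sum]
    exact Finset.sum_congr rfl fun u _ => Finset.sum_congr rfl fun w _ => by ring
  have h2 : trInner (Matrix.vecMulVec a v) P = trInner (Matrix.vecMulVec v a) P := by
    simp only [trInner, Matrix.vecMulVec_apply]
    rw [Finset.sum_comm]
    exact Finset.sum_congr rfl fun u _ => Finset.sum_congr rfl fun w _ => by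
      rw [hP w u]; ring
  rw [trInner_add, h2, h1]; ring

lemma trInner_dualH {m n : ℕ} {α : Fin m → ℝ} {β : Fin n → ℝ}
    {P : Matrix (Fin m × Fin n) (Fin m × Fin n) ℝ} {x : Fin m × Fin n → ℝ}
    (hP : ∀ u v, P u v = P v u)
    (ha : ∀ i, P.mulVec (aVec i) = α i • x) (hb : ∀ j, P.mulVec (bVec j) = β j • x)
    (L Z : Matrix (Fin m × Fin n) (Fin m × Fin n) ℝ)
    (η : Fin m → (Fin m × Fin n → ℝ)) (θ : Fin n → (Fin m × Fin n → ℝ)) :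
    trInner (dualH L Z η θ) P = trInner L P - trInner Z P
      + ∑ i, α i * (η i ⬝ᵥ x) + ∑ j, β j * (θ j ⬝ᵥ x) := by
  simp only [dualH, trInner_add (_ + _), trInner_add (_ - _), trInner_sub, trInner_smul, trInner_sum,
    trInner_vecMulVec_symm hP, ha, hb, dotProduct_smul, smul_eq_mul, ← Finset.mul_sum]
  ring

lemma aVec_dotProduct_vecz {m n : ℕ} (π : Matrix (Fin m) (Fin n) ℝ) (i : Fin m) :
    aVec i ⬝ᵥ vecz π = ∑ j, π i j := by
  simp [dotProduct, aVec, vecz, Fintype.sum_prod_type]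

lemma bVec_dotProduct_vecz {m n : ℕ} (π : Matrix (Fin m) (Fin n) ℝ) (j : Fin n) :
    bVec j ⬝ᵥ vecz π = ∑ i, π i j := by
  simp [dotProduct, bVec, vecz, Fintype.sum_prod_type]

lemma dualG_dotProduct_vecz {m n : ℕ} {α : Fin m → ℝ} {β : Fin n → ℝ}
    {π : Matrix (Fin m) (Fin n) ℝ} (hπ : IsCoupling α β π)
    (lam : Fin m → ℝ) (mu : Fin n → ℝ)
    (η : Fin m → (Fin m × Fin n → ℝ)) (θ : Fin n → (Fin m × Fin n → ℝ))
    (y : Fin m × Fin n → ℝ) :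
    dualG α β lam mu η θ y ⬝ᵥ vecz π = lam ⬝ᵥ α + mu ⬝ᵥ β
      + ∑ i, α i * (η i ⬝ᵥ vecz π) + ∑ j, β j * (θ j ⬝ᵥ vecz π) + 2 * (y ⬝ᵥ vecz π) := by
  simp only [dualG, add_dotProduct, sum_dotProduct, smul_dotProduct, smul_eq_mul,
    aVec_dotProduct_vecz, bVec_dotProduct_vecz, hπ.2.1, hπ.2.2, Finset.sum_add_distrib]
  rw [show lam ⬝ᵥ α = ∑ i, lam i * α i from rfl, show mu ⬝ᵥ β = ∑ j, mu j * β j from rfl]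
  ring

/-- Weak duality between GW-Dual and GW-SDP. -/
theorem stmt_7 {m n : ℕ} (α : Fin m → ℝ) (β : Fin n → ℝ)
    (hα : IsProbVec α) (hβ : IsProbVec β)
    (L : Matrix (Fin m × Fin n) (Fin m × Fin n) ℝ) (hL : L.IsSymm)
    (lam : Fin m → ℝ) (mu : Fin n → ℝ)
    (η : Fin m → (Fin m × Fin n → ℝ)) (θ : Fin n → (Fin m × Fin n → ℝ))
    (Z : Matrix (Fin m × Fin n) (Fin m × Fin n) ℝ)
    (y : Fin m × Fin n → ℝ) (t : ℝ)
    (hdual : GWDualFeasible α β L lam mu η θ Z y t)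
    (π : Matrix (Fin m) (Fin n) ℝ) (P : Matrix (Fin m × Fin n) (Fin m × Fin n) ℝ)
    (hfeas : GWSDPFeasible α β π P) :
    lam ⬝ᵥ α + mu ⬝ᵥ β - t ≤ trInner L P := by
  obtain ⟨hH, hg, hZ⟩ := hdual
  obtain ⟨hπ, hB, ha, hb, hP⟩ := hfeas
  have hsymm : ∀ u v, P u v = P v u := fun u v => by
    simpa [blockMat] using (hB.isHermitian.apply (some u) (some v)).symm
  have hpair := trInner_blockMat_nonneg hH hB
  rw [trInner_dualH hsymm ha hb] at hpair
  have hZP : 0 ≤ trInner Z P :=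
    Finset.sum_nonneg fun u _ => Finset.sum_nonneg fun v _ => mul_nonneg (hZ u v) (hP u v)
  have hgx : dualG α β lam mu η θ y ⬝ᵥ vecz π ≤ 0 :=
    Finset.sum_nonpos fun u _ => mul_nonpos_of_nonpos_of_nonneg (hg u) (hπ.1 u.1 u.2)
  rw [dualG_dotProduct_vecz hπ] at hgx
  linarith
end
end

section
/- (Strict dual feasibility / Slater point for GW-Dual.) For any symmetric matrix L ∈ ℝ^{mn×mn} and any probability vectors α ∈ ℝ^m, β ∈ ℝ^n, there exist dual variables (λ, μ, η, θ, Z, y, t) such that all inequality constraints of GW-Dual hold strictly: Z has all entries strictly positive, the vector g := ∑_{i=1}^m (λ_i a_i + α_i η^i) + ∑_{j=1}^n (μ_j b_j + β_j θ^j) + 2y has all entries strictly negative, and the block matrix [[H, y],[yᵀ, t]] with H := L − Z + (1/2)∑_{i=1}^m (η^i a_iᵀ + a_i (η^i)ᵀ) + (1/2)∑_{j=1}^n (θ^j b_jᵀ + b_j (θ^j)ᵀ) is positive definite. -/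
/-!
The constraints can be met with `H = I`, `y = 0`, `t = 1`, so that the block matrix is the identity.
Taking every `η^i` equal to the constant vector `s` makes
`(1/2) ∑ (η^i a_iᵀ + a_i (η^i)ᵀ) = s J`, with `J` the all-ones matrix, because the `a_i` sum to the
all-ones vector. With `θ = 0` and `Z = L + s J - I` this gives `H = I`, and `Z` is entrywise positive
once `s` exceeds `1 + max |L u v|`. Since `∑ α_i = 1`, the choice `λ_i = -s - 1`, `μ = 0`
gives `g = -1` in every entry.
-/

open Matrix BigOperators

noncomputable section

/-- Strict dual feasibility (Slater point) for the GW-Dual program. -/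
theorem stmt_9 {m n : ℕ} (α : Fin m → ℝ) (β : Fin n → ℝ)
    (hα : IsProbVec α) (hβ : IsProbVec β)
    (L : Matrix (Fin m × Fin n) (Fin m × Fin n) ℝ) (hL : L.IsSymm) :
    ∃ (lam : Fin m → ℝ) (mu : Fin n → ℝ)
      (η : Fin m → (Fin m × Fin n → ℝ)) (θ : Fin n → (Fin m × Fin n → ℝ))
      (Z : Matrix (Fin m × Fin n) (Fin m × Fin n) ℝ)
      (y : Fin m × Fin n → ℝ) (t : ℝ),
      (∀ u v, 0 < Z u v) ∧
      (∀ u, dualG α β lam mu η θ y u < 0) ∧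
      (blockMat (dualH L Z η θ) y t).PosDef := by
  obtain ⟨s, hs⟩ : ∃ s : ℝ, ∀ u v, 1 < s + L u v := by
    refine ⟨2 + ∑ u, ∑ v, |L u v|, fun u v => ?_⟩
    have h1 : |L u v| ≤ ∑ v, |L u v| :=
      Finset.single_le_sum (f := fun v => |L u v|) (fun _ _ => abs_nonneg _) (Finset.mem_univ v)
    have h2 : ∑ v, |L u v| ≤ ∑ u, ∑ v, |L u v| :=
      Finset.single_le_sum (f := fun u => ∑ v, |L u v|)
        (fun _ _ => Finset.sum_nonneg fun _ _ => abs_nonneg _) (Finset.mem_univ u)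
    linarith [neg_abs_le (L u v)]
  refine ⟨fun _ => -s - 1, 0, fun _ _ => s, 0,
    Matrix.of fun u v => L u v + s - (1 : Matrix _ _ ℝ) u v, 0, 1, ?_, ?_, ?_⟩
  · intro u v
    have := hs u v
    have h : (1 : Matrix (Fin m × Fin n) (Fin m × Fin n) ℝ) u v ≤ 1 := by
      rw [Matrix.one_apply]; split_ifs <;> norm_num
    simp only [Matrix.of_apply]
    linarith
  · intro u
    have h : ∑ i, α i * s = s := by rw [← Finset.sum_mul, hα.2, one_mul]
    simp [dualG, aVec, Finset.sum_add_distrib, h]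
    linarith
  · have hH : dualH L (Matrix.of fun u v => L u v + s - (1 : Matrix _ _ ℝ) u v)
        (fun _ _ => s) 0 = 1 := by
      ext u v
      simp [dualH, aVec, Matrix.sum_apply, Matrix.vecMulVec_apply, Finset.sum_add_distrib]
      ring
    have hB : blockMat (1 : Matrix (Fin m × Fin n) (Fin m × Fin n) ℝ) 0 1 = 1 := by
      ext u v
      rcases u with _ | u <;> rcases v with _ | v <;> simp [blockMat, Matrix.one_apply]
    rw [hH, hB]
    exact Matrix.PosDef.one
end
end

section
/- (Rank-one optimality implies zero duality gap.) Let L ∈ ℝ^{mn×mn} be symmetric and let (π_sdp, P_sdp) be a GW-SDP-feasible pair that minimizes ⟨L, ·⟩ over all GW-SDP-feasible pairs. If the block matrix [[P_sdp, vec(π_sdp)],[vec(π_sdp)ᵀ, 1]] has rank equal to one, then P_sdp = vec(π_sdp)·vec(π_sdp)ᵀ, the transportation plan π_sdp is a global minimizer of vec(·)ᵀ L vec(·) over Π(α,β), and the GW-SDP optimal value ⟨L, P_sdp⟩ equals the Gromov-Wasserstein optimal value inf_{π ∈ Π(α,β)} vec(π)ᵀ L vec(π). -/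
/-!
A block matrix `[[P, x], [xᵀ, 1]]` of rank one has its column space spanned
by its last column `(x, 1)`; comparing last entries shows that its column with index `b` is
`x b • (x, 1)`, so `P = x xᵀ` (`eq_vecMulVec_of_rank_blockMat_eq_one`).

Conversely, every coupling `π` lifts to the feasible pair `(π, vec π (vec π)ᵀ)`
(`IsCoupling.feasible_lift`), at which the linear objective of the relaxation equals the
Gromov-Wasserstein objective (`trInner_vecMulVec`). Hence the optimal value of the relaxation is
a lower bound for the Gromov-Wasserstein objective, and it is attained there as soon as
`P = vec π (vec π)ᵀ` at an optimum.
-/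

open Matrix BigOperators

noncomputable section

theorem eq_vecMulVec_of_rank_blockMat_eq_one {m n : ℕ}
    (P : Matrix (Fin m × Fin n) (Fin m × Fin n) ℝ) (x : Fin m × Fin n → ℝ)
    (h : (blockMat P x 1).rank = 1) : P = Matrix.vecMulVec x x := by
  have hcol : ∀ v, (blockMat P x 1).col v ∈ LinearMap.range (blockMat P x 1).mulVecLin := by
    intro v
    exact ⟨Pi.single v 1, by simp⟩
  have hne : (⟨_, hcol none⟩ : LinearMap.range (blockMat P x 1).mulVecLin) ≠ 0 := by
    intro h0
    have h1 := congrFun (congrArg Subtype.val h0) none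
    simp [blockMat] at h1
  ext a b
  obtain ⟨c, hc⟩ := (finrank_eq_one_iff_of_nonzero' _ hne).1 h ⟨_, hcol (some b)⟩
  have h1 : c * 1 = x b := congrFun (congrArg Subtype.val hc) none
  have h2 : c * x a = P a b := congrFun (congrArg Subtype.val hc) (some a)
  rw [Matrix.vecMulVec_apply, ← h2, ← h1, mul_one, mul_comm]

theorem posSemidef_blockMat_vecMulVec {m n : ℕ} (x : Fin m × Fin n → ℝ) :
    (blockMat (Matrix.vecMulVec x x) x 1).PosSemidef := by
  have h := Matrix.posSemidef_vecMulVec_self_star (R := ℝ)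
    (fun u : Option (Fin m × Fin n) => u.elim 1 x)
  convert h using 1
  ext u v
  rcases u with _ | u <;> rcases v with _ | v <;> simp [blockMat, Matrix.vecMulVec_apply]

/-- The exact lift of a coupling: the relaxation contains the Gromov-Wasserstein problem. -/
theorem IsCoupling.feasible_lift {m n : ℕ} {α : Fin m → ℝ} {β : Fin n → ℝ}
    {π : Matrix (Fin m) (Fin n) ℝ} (h : IsCoupling α β π) :
    GWSDPFeasible α β π (Matrix.vecMulVec (vecz π) (vecz π)) := by
  refine ⟨h, posSemidef_blockMat_vecMulVec _, fun i => ?_, fun j => ?_,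
    fun u v => mul_nonneg (h.1 _ _) (h.1 _ _)⟩
  · have hi : vecz π ⬝ᵥ aVec i = α i := by
      rw [← h.2.1 i]
      simp [dotProduct, vecz, aVec, Fintype.sum_prod_type_right]
    rw [Matrix.vecMulVec_mulVec, hi]
    simp
  · have hj : vecz π ⬝ᵥ bVec j = β j := by
      rw [← h.2.2 j]
      simp [dotProduct, vecz, bVec, Fintype.sum_prod_type]
    rw [Matrix.vecMulVec_mulVec, hj]
    simp

theorem trInner_vecMulVec {m n : ℕ} (L : Matrix (Fin m × Fin n) (Fin m × Fin n) ℝ)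
    (π : Matrix (Fin m) (Fin n) ℝ) :
    trInner L (Matrix.vecMulVec (vecz π) (vecz π)) = gwObj L π := by
  simp only [trInner, gwObj, dotProduct, Matrix.mulVec, Matrix.vecMulVec_apply, Finset.mul_sum]
  exact Finset.sum_congr rfl fun u _ => Finset.sum_congr rfl fun v _ => by ring

/-- Rank-one optimality implies zero duality gap: `P_sdp = vec(π_sdp) vec(π_sdp)ᵀ`,
`π_sdp` is a global GW minimizer, and the GW-SDP value equals the GW optimal value. -/
theorem stmt_12 {m n : ℕ} (α : Fin m → ℝ) (β : Fin n → ℝ)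
    (hα : IsProbVec α) (hβ : IsProbVec β)
    (L : Matrix (Fin m × Fin n) (Fin m × Fin n) ℝ) (hL : L.IsSymm)
    (πsdp : Matrix (Fin m) (Fin n) ℝ) (Psdp : Matrix (Fin m × Fin n) (Fin m × Fin n) ℝ)
    (hfeas : GWSDPFeasible α β πsdp Psdp)
    (hmin : ∀ π' P', GWSDPFeasible α β π' P' → trInner L Psdp ≤ trInner L P')
    (hrank : (blockMat Psdp (vecz πsdp) 1).rank = 1) :
    Psdp = Matrix.vecMulVec (vecz πsdp) (vecz πsdp) ∧
    (∀ π', IsCoupling α β π' → gwObj L πsdp ≤ gwObj L π') ∧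
    trInner L Psdp = sInf {r : ℝ | ∃ π', IsCoupling α β π' ∧ r = gwObj L π'} := by
  have hP := eq_vecMulVec_of_rank_blockMat_eq_one _ _ hrank
  have hval : trInner L Psdp = gwObj L πsdp := by rw [hP, trInner_vecMulVec]
  have hopt : ∀ π', IsCoupling α β π' → gwObj L πsdp ≤ gwObj L π' := by
    intro π' hπ'
    rw [← hval, ← trInner_vecMulVec]
    exact hmin _ _ hπ'.feasible_lift
  refine ⟨hP, hopt, ?_⟩
  have hleast : IsLeast {r : ℝ | ∃ π', IsCoupling α β π' ∧ r = gwObj L π'} (gwObj L πsdp) :=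
    ⟨⟨πsdp, hfeas.1, rfl⟩, by rintro _ ⟨π', hπ', rfl⟩; exact hopt π' hπ'⟩
  rw [hval, hleast.csInf_eq]
end
end

section
/- (Barycenter update for the squared loss.) Let K ≥ 1 and let λ_1,…,λ_K ≥ 0 be weights with ∑_{k=1}^K λ_k = 1. For each k, let C_k ∈ ℝ^{n_k×n_k}, let α_k ∈ ℝ^{n_k} be a probability vector, let ᾱ ∈ ℝ^m be a probability vector with all entries strictly positive, and let π_k ∈ Π(α_k, ᾱ). Define F : ℝ^{m×m} → ℝ by F(C̄) = ∑_{k=1}^K λ_k ∑_{i,p ∈ [n_k]} ∑_{j,q ∈ [m]} ((C_k)_{ip} − C̄_{jq})² · (π_k)_{ij} · (π_k)_{pq}. Then F attains its global minimum over ℝ^{m×m} at the matrix C̄* whose entries are C̄*_{jq} = (∑_{k=1}^K λ_k (π_kᵀ C_k π_k)_{jq}) / (ᾱ_j ᾱ_q), i.e., the entrywise quotient C̄* = (∑_k λ_k π_kᵀ C_k π_k) / (ᾱ ᾱᵀ). -/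
/-! Exchanging the sums, `F(X) = ∑_{j,q} (A_{jq} - 2 X_{jq} S_{jq} + X_{jq}² ᾱ_j ᾱ_q)` with
`S = ∑ₖ λₖ πₖᵀ Cₖ πₖ` and `A` independent of `X`; the quadratic coefficient is `ᾱ_j ᾱ_q` because the
column sums of every `πₖ` are `ᾱ` and the weights sum to 1. The entries of `X` therefore decouple,
and each one-variable quadratic, having positive leading coefficient, is minimized at
`X_{jq} = S_{jq} / (ᾱ_j ᾱ_q)`. -/

open Matrix BigOperators

noncomputable section

/-- Expansion of one marginal pair `(j, q)` of the objective as a quadratic in `x = X_{jq}`. -/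
lemma sum_sq_mul_coupling {n m : ℕ} (C : Matrix (Fin n) (Fin n) ℝ)
    (P : Matrix (Fin n) (Fin m) ℝ) (b : Fin m → ℝ) (hP : ∀ j, ∑ i, P i j = b j)
    (x : ℝ) (j q : Fin m) :
    ∑ i, ∑ p, (C i p - x) ^ 2 * P i j * P p q =
      (∑ i, ∑ p, C i p ^ 2 * P i j * P p q) - 2 * x * (Pᵀ * C * P) j q
        + x ^ 2 * (b j * b q) := by
  have hM : (Pᵀ * C * P) j q = ∑ i, ∑ p, C i p * P i j * P p q := by
    simp only [Matrix.mul_apply, Matrix.transpose_apply, Finset.sum_mul]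
    rw [Finset.sum_comm]
    exact Finset.sum_congr rfl fun i _ => Finset.sum_congr rfl fun p _ => by ring
  have hw : b j * b q = ∑ i, ∑ p, P i j * P p q := by
    rw [← hP j, ← hP q, Finset.sum_mul_sum]
  rw [hM, hw]
  simp only [Finset.mul_sum, ← Finset.sum_sub_distrib, ← Finset.sum_add_distrib]
  exact Finset.sum_congr rfl fun i _ => Finset.sum_congr rfl fun p _ => by ring

/-- The objective decouples over the entries of `X`: the contribution of `(j, q)` is a quadratic in
`X_{jq}` with leading coefficient `b_j b_q`. -/
lemma objective_eq_sum_quadratic {K m : ℕ} (lam : Fin K → ℝ) (hsum : ∑ k, lam k = 1)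
    (nk : Fin K → ℕ) (C : ∀ k, Matrix (Fin (nk k)) (Fin (nk k)) ℝ) (b : Fin m → ℝ)
    (P : ∀ k, Matrix (Fin (nk k)) (Fin m) ℝ) (hP : ∀ k j, ∑ i, P k i j = b j)
    (X : Matrix (Fin m) (Fin m) ℝ) :
    ∑ k, lam k * ∑ i, ∑ p, ∑ j, ∑ q, (C k i p - X j q) ^ 2 * P k i j * P k p q =
      ∑ j, ∑ q, ((∑ k, lam k * ∑ i, ∑ p, C k i p ^ 2 * P k i j * P k p q)
        - 2 * X j q * (∑ k, lam k * ((P k)ᵀ * C k * P k) j q) + X j q ^ 2 * (b j * b q)) := by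
  have hswap : ∀ k, ∑ i, ∑ p, ∑ j, ∑ q, (C k i p - X j q) ^ 2 * P k i j * P k p q =
      ∑ j, ∑ q, ∑ i, ∑ p, (C k i p - X j q) ^ 2 * P k i j * P k p q := by
    intro k
    simp_rw [Finset.sum_comm (s := (Finset.univ : Finset (Fin (nk k))))
      (t := (Finset.univ : Finset (Fin m)))]
  simp only [hswap, Finset.mul_sum (s := (Finset.univ : Finset (Fin m)))]
  rw [Finset.sum_comm]
  refine Finset.sum_congr rfl fun j _ => ?_
  rw [Finset.sum_comm]
  refine Finset.sum_congr rfl fun q _ => ?_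
  have hone : X j q ^ 2 * (b j * b q) = ∑ k, lam k * (X j q ^ 2 * (b j * b q)) := by
    rw [← Finset.sum_mul, hsum, one_mul]
  rw [hone, Finset.mul_sum, ← Finset.sum_sub_distrib, ← Finset.sum_add_distrib]
  refine Finset.sum_congr rfl fun k _ => ?_
  rw [sum_sq_mul_coupling (C k) (P k) b (hP k)]
  ring

/-- Barycenter update for the squared loss: the entrywise quotient
`C̄* = (∑ k λ_k π_kᵀ C_k π_k) / (ᾱ ᾱᵀ)` globally minimizes the weighted GW objective. -/
theorem stmt_13 {K m : ℕ} (hK : 1 ≤ K)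
    (lam : Fin K → ℝ) (hlam : ∀ k, 0 ≤ lam k) (hsum : ∑ k, lam k = 1)
    (nk : Fin K → ℕ) (C : ∀ k, Matrix (Fin (nk k)) (Fin (nk k)) ℝ)
    (αk : ∀ k, Fin (nk k) → ℝ) (hαk : ∀ k, IsProbVec (αk k))
    (abar : Fin m → ℝ) (habar : IsProbVec abar) (hpos : ∀ j, 0 < abar j)
    (π : ∀ k, Matrix (Fin (nk k)) (Fin m) ℝ)
    (hπ : ∀ k, IsCoupling (αk k) abar (π k))
    (F : Matrix (Fin m) (Fin m) ℝ → ℝ)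
    (hF : F = fun Cbar =>
      ∑ k, lam k * ∑ i, ∑ p, ∑ j, ∑ q,
        (C k i p - Cbar j q) ^ 2 * π k i j * π k p q)
    (Cstar : Matrix (Fin m) (Fin m) ℝ)
    (hCstar : Cstar = Matrix.of fun j q =>
      (∑ k, lam k * ((π k)ᵀ * C k * π k) j q) / (abar j * abar q)) :
    ∀ Cbar : Matrix (Fin m) (Fin m) ℝ, F Cstar ≤ F Cbar := by
  intro X
  subst hF
  simp only [objective_eq_sum_quadratic lam hsum nk C abar π fun k => (hπ k).2.2]
  refine Finset.sum_le_sum fun j _ => Finset.sum_le_sum fun q _ => ?_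
  have hw : 0 < abar j * abar q := mul_pos (hpos j) (hpos q)
  have hS : ∑ k, lam k * ((π k)ᵀ * C k * π k) j q = Cstar j q * (abar j * abar q) := by
    rw [hCstar, Matrix.of_apply, div_mul_cancel₀ _ hw.ne']
  rw [hS]
  -- The difference of the two sides is `(X j q - Cstar j q) ^ 2 * (abar j * abar q)`.
  nlinarith [mul_nonneg (sq_nonneg (X j q - Cstar j q)) hw.le]
end
end
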